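/- Let α > 0, d_l > 0, h₀ > 0, k_l > 0, and define f₂(x) = 1 / [ M(α/2 + 1/2, 1/2, x²) + (2√(d_l) h₀ / k_l) x M(α/2 + 1, 3/2, x²) ] for x > 0. Then f₂ is strictly decreasing on (0,∞), f₂(x) tends to 1 as x → 0⁺, and f₂(x) tends to 0 as x → +∞. -/

import Mathlib

noncomputable def poch (a : ℝ) (s : ℕ) : ℝ := ∏ i ∈ Finset.range s, (a + i)

/-- Kummer's confluent hypergeometric function `M(a,b,z)`,
defined by the everywhere-convergent series `M(a,b,z) = Σ_{s} (a)_s z^s / ((b)_s s!)`. -/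
noncomputable def kummerM (a b z : ℝ) : ℝ :=
  ∑' s : ℕ, poch a s / (poch b s * (Nat.factorial s)) * z ^ s

/-- Tricomi's confluent hypergeometric function
`U(a,b,z) = (1/Γ(a)) ∫_0^∞ e^{−z t} t^{a−1} (1+t)^{b−a−1} dt`. -/
noncomputable def tricomiU (a b z : ℝ) : ℝ :=
  (1 / Real.Gamma a) *
    ∫ t in Set.Ioi (0:ℝ), Real.exp (-z * t) * t ^ (a - 1) * (1 + t) ^ (b - a - 1)

/-! Both Kummer series have nonnegative coefficients and constant term `1`, so on `[0, ∞)` they are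
nondecreasing and at least `1`. The denominator `D` of `f₂` is therefore strictly increasing there,
with `D x ≥ 1 + c * x` for the constant `c > 0` in front of its second term. Since the series have
infinite radius of convergence, `D` is continuous, and `D 0 = 1`. The three claims on `f₂ = 1 / D`
follow. -/

open Filter Set Topology
open scoped ENNReal

lemma poch_succ (a : ℝ) (s : ℕ) : poch a (s + 1) = poch a s * (a + s) :=
  Finset.prod_range_succ _ _

lemma poch_nonneg {a : ℝ} (ha : 0 ≤ a) (s : ℕ) : 0 ≤ poch a s :=
  Finset.prod_nonneg fun _ _ => by positivity

/-- The coefficient `(a)_s / ((b)_s s!)` of `z ^ s` in Kummer's series `M(a,b,z)`. Because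
`x / 0 = 0`, it vanishes when `(b)_s = 0`, so the series converges for every real `b`. -/
noncomputable def kummerCoeff (a b : ℝ) (s : ℕ) : ℝ :=
  poch a s / (poch b s * s.factorial)

lemma kummerCoeff_zero (a b : ℝ) : kummerCoeff a b 0 = 1 := by
  simp [kummerCoeff, poch]

lemma kummerCoeff_succ (a b : ℝ) (s : ℕ) :
    kummerCoeff a b (s + 1) = kummerCoeff a b s * ((a + s) / ((b + s) * (s + 1))) := by
  simp only [kummerCoeff, poch_succ, Nat.factorial_succ, Nat.cast_mul, Nat.cast_succ]
  rw [div_mul_div_comm]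
  ring_nf

lemma kummerCoeff_nonneg {a b : ℝ} (ha : 0 ≤ a) (hb : 0 ≤ b) (s : ℕ) : 0 ≤ kummerCoeff a b s :=
  div_nonneg (poch_nonneg ha s) (mul_nonneg (poch_nonneg hb s) (Nat.cast_nonneg _))

lemma tendsto_kummerCoeff_ratio (a b : ℝ) :
    Tendsto (fun s : ℕ => (a + s) / ((b + s) * (s + 1))) atTop (𝓝 0) := by
  have h_quot : Tendsto (fun s : ℕ => (a + s) / (b + s)) atTop (𝓝 1) := by
    simpa using tendsto_add_mul_div_add_mul_atTop_nhds a b 1 one_ne_zero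
  simpa only [div_mul_div_comm, mul_one, mul_zero] using
    h_quot.mul (tendsto_one_div_add_atTop_nhds_zero_nat (𝕜 := ℝ))

theorem summable_kummerCoeff_mul_pow (a b z : ℝ) :
    Summable fun s => kummerCoeff a b s * z ^ s := by
  have h_ratio : Tendsto (fun s : ℕ => ‖(a + s) / ((b + s) * (s + 1)) * z‖) atTop (𝓝 0) := by
    simpa using ((tendsto_kummerCoeff_ratio a b).mul_const z).norm
  refine summable_of_ratio_norm_eventually_le one_half_lt_one ?_
  filter_upwards [h_ratio.eventually_le_const one_half_pos] with s hs
  calc ‖kummerCoeff a b (s + 1) * z ^ (s + 1)‖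
      = ‖(a + s) / ((b + s) * (s + 1)) * z‖ * ‖kummerCoeff a b s * z ^ s‖ := by
        rw [← norm_mul, kummerCoeff_succ, pow_succ]
        ring_nf
    _ ≤ 1 / 2 * ‖kummerCoeff a b s * z ^ s‖ := by gcongr

lemma kummerM_eq_ofScalarsSum (a b : ℝ) :
    kummerM a b = FormalMultilinearSeries.ofScalarsSum (kummerCoeff a b) :=
  (FormalMultilinearSeries.ofScalarsSum_eq_tsum (kummerCoeff a b)).symm

lemma radius_ofScalars_kummerCoeff (a b : ℝ) :
    (FormalMultilinearSeries.ofScalars ℝ (kummerCoeff a b)).radius = ∞ := by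
  refine FormalMultilinearSeries.radius_eq_top_of_summable_norm _ fun r => ?_
  simpa [norm_mul] using (summable_kummerCoeff_mul_pow a b r).norm

theorem continuous_kummerM (a b : ℝ) : Continuous (kummerM a b) := by
  have h_radius := radius_ofScalars_kummerCoeff a b
  have h_series := (FormalMultilinearSeries.ofScalars ℝ (kummerCoeff a b)).hasFPowerSeriesOnBall
    (h_radius ▸ ENNReal.zero_lt_top)
  rw [kummerM_eq_ofScalarsSum, ← continuousOn_univ]
  simpa only [h_radius, Metric.eball_top] using! h_series.continuousOn

lemma kummerM_zero (a b : ℝ) : kummerM a b 0 = 1 := by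
  simp [kummerM_eq_ofScalarsSum, kummerCoeff_zero]

theorem monotoneOn_kummerM {a b : ℝ} (ha : 0 ≤ a) (hb : 0 ≤ b) :
    MonotoneOn (kummerM a b) (Ici 0) := fun z hz w _ hzw =>
  (summable_kummerCoeff_mul_pow a b z).tsum_le_tsum
    (fun s => mul_le_mul_of_nonneg_left (pow_le_pow_left₀ hz hzw s) (kummerCoeff_nonneg ha hb s))
    (summable_kummerCoeff_mul_pow a b w)

lemma one_le_kummerM {a b z : ℝ} (ha : 0 ≤ a) (hb : 0 ≤ b) (hz : 0 ≤ z) : 1 ≤ kummerM a b z :=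
  kummerM_zero a b ▸ monotoneOn_kummerM ha hb self_mem_Ici hz hz

/-- The denominator `M(a,b,x²) + c x M(a',b',x²)` of `f₂`, with the parameters of the two Kummer
functions left free. -/
noncomputable def kummerDenom (a b a' b' c x : ℝ) : ℝ :=
  kummerM a b (x ^ 2) + c * x * kummerM a' b' (x ^ 2)

lemma kummerDenom_zero (a b a' b' c : ℝ) : kummerDenom a b a' b' c 0 = 1 := by
  simp [kummerDenom, kummerM_zero]

lemma continuous_kummerDenom (a b a' b' c : ℝ) : Continuous (kummerDenom a b a' b' c) := by
  have h := continuous_kummerM a b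
  have h' := continuous_kummerM a' b'
  unfold kummerDenom
  fun_prop

section Denominator

variable {a b a' b' c : ℝ}

lemma one_add_mul_le_kummerDenom (ha : 0 ≤ a) (hb : 0 ≤ b) (ha' : 0 ≤ a') (hb' : 0 ≤ b')
    (hc : 0 ≤ c) {x : ℝ} (hx : 0 ≤ x) :
    1 + c * x ≤ kummerDenom a b a' b' c x :=
  add_le_add (one_le_kummerM ha hb (sq_nonneg x))
    (le_mul_of_one_le_right (by positivity) (one_le_kummerM ha' hb' (sq_nonneg x)))

lemma kummerDenom_pos (ha : 0 ≤ a) (hb : 0 ≤ b) (ha' : 0 ≤ a') (hb' : 0 ≤ b')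
    (hc : 0 ≤ c) {x : ℝ} (hx : 0 ≤ x) : 0 < kummerDenom a b a' b' c x :=
  lt_of_lt_of_le (by positivity) (one_add_mul_le_kummerDenom ha hb ha' hb' hc hx)

theorem strictMonoOn_kummerDenom (ha : 0 ≤ a) (hb : 0 ≤ b) (ha' : 0 ≤ a') (hb' : 0 ≤ b')
    (hc : 0 < c) :
    StrictMonoOn (kummerDenom a b a' b' c) (Ici 0) := fun x (hx : 0 ≤ x) y (hy : 0 ≤ y) hxy => by
  have h_sq : x ^ 2 ≤ y ^ 2 := pow_le_pow_left₀ hx hxy.le 2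
  have h_fst : kummerM a b (x ^ 2) ≤ kummerM a b (y ^ 2) :=
    monotoneOn_kummerM ha hb (sq_nonneg x) (sq_nonneg y) h_sq
  have h_snd : kummerM a' b' (x ^ 2) ≤ kummerM a' b' (y ^ 2) :=
    monotoneOn_kummerM ha' hb' (sq_nonneg x) (sq_nonneg y) h_sq
  have h_pos : 0 < kummerM a' b' (x ^ 2) :=
    one_pos.trans_le (one_le_kummerM ha' hb' (sq_nonneg x))
  exact add_lt_add_of_le_of_lt h_fst
    (mul_lt_mul (mul_lt_mul_of_pos_left hxy hc) h_snd h_pos (by positivity))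

theorem tendsto_kummerDenom_atTop (ha : 0 ≤ a) (hb : 0 ≤ b) (ha' : 0 ≤ a') (hb' : 0 ≤ b')
    (hc : 0 < c) :
    Tendsto (kummerDenom a b a' b' c) atTop atTop := by
  refine tendsto_atTop_mono' _ ?_
    (tendsto_atTop_add_const_left _ 1 (tendsto_id.const_mul_atTop hc))
  filter_upwards [eventually_ge_atTop 0] with x hx
  exact one_add_mul_le_kummerDenom ha hb ha' hb' hc.le hx

theorem statement_8_general (ha : 0 ≤ a) (hb : 0 < b) (ha' : 0 ≤ a')
    (hb' : 0 < b') (hc : 0 < c) {f₂ : ℝ → ℝ}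
    (hf₂ : ∀ x : ℝ, 0 < x →
      f₂ x = 1 / (kummerM a b (x ^ 2) + c * x * kummerM a' b' (x ^ 2))) :
    StrictAntiOn f₂ (Ioi 0) ∧ Tendsto f₂ (𝓝[>] 0) (𝓝 1) ∧ Tendsto f₂ atTop (𝓝 0) := by
  have h_inv : EqOn (kummerDenom a b a' b' c)⁻¹ f₂ (Ioi 0) := fun x hx => by
    rw [hf₂ x hx, one_div, Pi.inv_apply, kummerDenom]
  refine ⟨?_, ?_, ?_⟩
  · have h_anti : StrictAntiOn (kummerDenom a b a' b' c)⁻¹ (Ici 0) :=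
      inv_strictAntiOn.comp_strictMonoOn (strictMonoOn_kummerDenom ha hb.le ha' hb'.le hc)
        fun _ hx => kummerDenom_pos ha hb.le ha' hb'.le hc.le hx
    exact (h_anti.mono Ioi_subset_Ici_self).congr h_inv
  · have h_zero : Tendsto (kummerDenom a b a' b' c) (𝓝 0) (𝓝 1) :=
      (continuous_kummerDenom a b a' b' c).tendsto' _ _ (kummerDenom_zero a b a' b' c)
    have h_lim : Tendsto (kummerDenom a b a' b' c)⁻¹ (𝓝[>] 0) (𝓝 1) :=
      inv_one (G := ℝ) ▸ (h_zero.mono_left nhdsWithin_le_nhds).inv₀ one_ne_zero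
    exact h_lim.congr' (h_inv.eventuallyEq_of_mem self_mem_nhdsWithin)
  · exact (tendsto_kummerDenom_atTop ha hb.le ha' hb'.le hc).inv_tendsto_atTop.congr'
      (h_inv.eventuallyEq_of_mem (Ioi_mem_atTop 0))

end Denominator

/-- `f₂(x) = 1/[M(α/2+1/2,1/2,x²) + (2√(d_l)h₀/k_l) x M(α/2+1,3/2,x²)]`
is strictly decreasing on `(0,∞)`, tends to `1` as `x → 0⁺`, and tends to `0` as `x → +∞`. -/
theorem statement_8 (α dl h₀ kl : ℝ) (hα : 0 < α) (hdl : 0 < dl) (hh₀ : 0 < h₀) (hkl : 0 < kl)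
    (f₂ : ℝ → ℝ)
    (hf₂ : ∀ x : ℝ, 0 < x → f₂ x =
      1 / (kummerM (α / 2 + 1 / 2) (1 / 2) (x ^ 2)
            + 2 * Real.sqrt dl * h₀ / kl * x * kummerM (α / 2 + 1) (3 / 2) (x ^ 2))) :
    StrictAntiOn f₂ (Set.Ioi 0) ∧
    Filter.Tendsto f₂ (nhdsWithin 0 (Set.Ioi 0)) (nhds 1) ∧
    Filter.Tendsto f₂ Filter.atTop (nhds 0) :=
  statement_8_general (by positivity) (by positivity) (by positivity) (by positivity)
    (by positivity) hf₂
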